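/- For a second-countable topological space X, Player II has a winning strategy in the ω-Menger game G_fin(Ω_X, Ω_X) if and only if Player II has a winning Markov strategy in G_fin(Ω_X, Ω_X). -/

import Mathlib

open TopologicalSpace Cardinal

/-- Player II has a winning (perfect-information) strategy in the selection game
`G_fin(𝒜, ℬ)`: during round `n`, Player I plays `A n ∈ 𝒜` and II responds with a
finite subset of `A n` depending on `⟨A 0, …, A n⟩`; II wins iff the union of
its selections lies in `ℬ`. -/
def WinStratFin {X : Type*} (𝒜 ℬ : Set (Set X)) : Prop :=
  ∃ σ : (n : ℕ) → (Fin (n + 1) → Set X) → Set X,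
    (∀ (n : ℕ) (s : Fin (n + 1) → Set X), (∀ i, s i ∈ 𝒜) →
      (σ n s).Finite ∧ σ n s ⊆ s (Fin.last n)) ∧
    ∀ A : ℕ → Set X, (∀ n, A n ∈ 𝒜) →
      (⋃ n : ℕ, σ n (fun i => A i)) ∈ ℬ

/-- Player II has a winning Markov strategy in `G_fin(𝒜, ℬ)`: its finite selection
from `A n` depends only on `A n` and the round number `n`. -/
def WinMarkovFin {X : Type*} (𝒜 ℬ : Set (Set X)) : Prop :=
  ∃ σ : Set X → ℕ → Set X,
    (∀ A ∈ 𝒜, ∀ n : ℕ, (σ A n).Finite ∧ σ A n ⊆ A) ∧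
    ∀ A : ℕ → Set X, (∀ n, A n ∈ 𝒜) → (⋃ n : ℕ, σ (A n) n) ∈ ℬ

/-- Player II has a winning (perfect-information) strategy in the strong selection
game `G_1(𝒜, ℬ)`: during round `n`, Player I plays `A n ∈ 𝒜` and II responds with a
single element of `A n` depending on `⟨A 0, …, A n⟩`; II wins iff the set of
its selections lies in `ℬ`. -/
def WinStratOne {X : Type*} (𝒜 ℬ : Set (Set X)) : Prop :=
  ∃ σ : (n : ℕ) → (Fin (n + 1) → Set X) → X,
    (∀ (n : ℕ) (s : Fin (n + 1) → Set X), (∀ i, s i ∈ 𝒜) →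
      σ n s ∈ s (Fin.last n)) ∧
    ∀ A : ℕ → Set X, (∀ n, A n ∈ 𝒜) →
      {x | ∃ n : ℕ, x = σ n (fun i => A i)} ∈ ℬ

/-- Player II has a winning Markov strategy in `G_1(𝒜, ℬ)`. -/
def WinMarkovOne {X : Type*} (𝒜 ℬ : Set (Set X)) : Prop :=
  ∃ σ : Set X → ℕ → X,
    (∀ A ∈ 𝒜, ∀ n : ℕ, σ A n ∈ A) ∧
    ∀ A : ℕ → Set X, (∀ n, A n ∈ 𝒜) → {x | ∃ n : ℕ, x = σ (A n) n} ∈ ℬ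

/-- `𝒟_X`: the collection of dense subsets of `X`. -/
def denseFamily (X : Type*) [TopologicalSpace X] : Set (Set X) := {D | Dense D}

/-- `ℬ_{X,x}`: the collection of subsets of `X` having `x` in their closure. -/
def blades (X : Type*) [TopologicalSpace X] (x : X) : Set (Set X) :=
  {A | x ∈ closure A}

/-- An ω-cover of `X`: an open cover such that every finite subset of `X` is
contained in some member. -/
def IsOmegaCover {X : Type*} [TopologicalSpace X] (𝒰 : Set (Set X)) : Prop :=
  (∀ U ∈ 𝒰, IsOpen U) ∧ (⋃₀ 𝒰 = Set.univ) ∧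
    ∀ F : Set X, F.Finite → ∃ U ∈ 𝒰, F ⊆ U

/-- `Ω_X`: the collection of ω-covers of `X`. -/
def omegaCovers (X : Type*) [TopologicalSpace X] : Set (Set (Set X)) :=
  {𝒰 | IsOmegaCover 𝒰}

/-- `𝒪_X`: the collection of open covers of `X`. -/
def openCovers (X : Type*) [TopologicalSpace X] : Set (Set (Set X)) :=
  {𝒰 | (∀ U ∈ 𝒰, IsOpen U) ∧ ⋃₀ 𝒰 = Set.univ}

/-- `C_p(X)`: continuous real-valued functions on `X` with the topology of
pointwise convergence (subspace of the product `ℝ^X`). -/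
abbrev Cp (X : Type*) [TopologicalSpace X] : Type _ := {f : X → ℝ // Continuous f}

/-- Countable fan tightness of `Y` at `y`. -/
def CFTat (Y : Type*) [TopologicalSpace Y] (y : Y) : Prop :=
  ∀ A : ℕ → Set Y, (∀ n, y ∈ closure (A n)) →
    ∃ B : ℕ → Set Y, (∀ n, (B n).Finite ∧ B n ⊆ A n) ∧ y ∈ closure (⋃ n, B n)

/-- Countable dense fan tightness of `Y` at `y`. -/
def CDFTat (Y : Type*) [TopologicalSpace Y] (y : Y) : Prop :=
  ∀ A : ℕ → Set Y, (∀ n, Dense (A n)) →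
    ∃ B : ℕ → Set Y, (∀ n, (B n).Finite ∧ B n ⊆ A n) ∧ y ∈ closure (⋃ n, B n)

/-- Selective separability of `X`. -/
def SelSep (X : Type*) [TopologicalSpace X] : Prop :=
  ∀ D : ℕ → Set X, (∀ n, Dense (D n)) →
    ∃ E : ℕ → Set X, (∀ n, (E n).Finite ∧ E n ⊆ D n) ∧ Dense (⋃ n, E n)

/-- The Ω-Menger selection principle `S_fin(Ω_X, Ω_X)`. -/
def OmegaMenger (X : Type*) [TopologicalSpace X] : Prop :=
  ∀ 𝒰 : ℕ → Set (Set X), (∀ n, 𝒰 n ∈ omegaCovers X) →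
    ∃ ℱ : ℕ → Set (Set X), (∀ n, (ℱ n).Finite ∧ ℱ n ⊆ 𝒰 n) ∧
      (⋃ n, ℱ n) ∈ omegaCovers X

/-- The one-point Lindelöfication topology on `Option α`: sets not containing
`none` (the point `∞`) are open, and a set containing `∞` is open iff its
complement is countable. -/
def lindTop (α : Type*) : TopologicalSpace (Option α) where
  IsOpen S := none ∈ S → Sᶜ.Countable
  isOpen_univ := by simp
  isOpen_inter := by
    intro s t hs ht hmem
    rw [Set.compl_inter]
    exact (hs hmem.1).union (ht hmem.2)
  isOpen_sUnion := by
    intro S hS hmem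
    obtain ⟨s, hsS, hns⟩ := hmem
    exact ((hS s hsS hns).mono
      (Set.compl_subset_compl.mpr (Set.subset_sUnion_of_mem hsS)))

/-!
Fix a winning strategy of II in the game on `Ω_X`. Let `C` consist of the finite unions of members
of a countable base. Every ω-cover is refined by an ω-cover contained in `C`, so I may be assumed to
play subfamilies of `C`. Then each position allows only countably many replies of II, and keeping
one move of I per reply leaves a countable tree of positions. For every finite `F ⊆ X` some position
of this tree forces II to cover `F` whatever I plays next: otherwise I could evade `F` forever along
a branch. Hence II wins by answering the `n`-th move as if it were played at the `n`-th position of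
the tree.
-/

section History

variable {α β : Type*}

theorem exists_seq_eq_apply_restrict (next : ∀ n, (Fin n → α) → α) :
    ∃ A : ℕ → α, ∀ n, A n = next n fun i => A i :=
  ⟨Nat.strongRec fun n A => next n fun i => A i i.2, Nat.strongRec_eq _⟩

theorem exists_seq_of_forall_exists_snoc {H : ∀ n, Set (Fin n → α)}
    {Q : ∀ n, (Fin (n + 1) → α) → Prop} (hnil : Fin.elim0 ∈ H 0)
    (hsnoc : ∀ n, ∀ h ∈ H n, ∃ a, Fin.snoc h a ∈ H (n + 1) ∧ Q n (Fin.snoc h a)) :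
    ∃ A : ℕ → α, ∀ n, Q n fun i => A i := by
  obtain ⟨a₀, -⟩ := hsnoc 0 _ hnil
  have : Nonempty α := ⟨a₀⟩
  choose! next hnext using hsnoc
  obtain ⟨A, hA⟩ := exists_seq_eq_apply_restrict next
  have restrict_succ (n : ℕ) :
      Fin.snoc (fun i : Fin n => A i) (next n fun i => A i) = fun i : Fin (n + 1) => A i := by
    rw [← hA n]
    exact Fin.snoc_init_self fun i : Fin (n + 1) => A i
  have restrict_mem (n : ℕ) : (fun i : Fin n => A i) ∈ H n := by
    induction n with
    | zero => exact Subsingleton.elim Fin.elim0 (fun i : Fin 0 => A i) ▸ hnil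
    | succ n ih => exact restrict_succ n ▸ (hnext n _ ih).1
  exact ⟨A, fun n => restrict_succ n ▸ (hnext n _ (restrict_mem n)).2⟩

/-- The histories of length `n` in which I only plays representatives: for each position and each
reply that the strategy `σ` can give there, `Set.rangeSplitting` selects one move of I provoking
that reply. -/
def representativeHistories (σ : ∀ n, (Fin (n + 1) → α) → β) : ∀ n, Set (Fin n → α)
  | 0 => Set.univ
  | n + 1 => ⋃ h ∈ representativeHistories σ n,
      Set.range fun b => Fin.snoc h (Set.rangeSplitting (fun a => σ n (Fin.snoc h a)) b)

variable {σ : ∀ n, (Fin (n + 1) → α) → β}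

theorem countable_representativeHistories
    (hσ : ∀ n (h : Fin n → α), (Set.range fun a => σ n (Fin.snoc h a)).Countable) (n : ℕ) :
    (representativeHistories σ n).Countable := by
  induction n with
  | zero => exact Set.countable_univ
  | succ n ih =>
    refine ih.biUnion fun h _ => ?_
    have := (hσ n h).to_subtype
    exact Set.countable_range _

theorem exists_snoc_mem_representativeHistories {n : ℕ} {h : Fin n → α}
    (hh : h ∈ representativeHistories σ n) (a : α) :
    ∃ a', Fin.snoc h a' ∈ representativeHistories σ (n + 1) ∧
      σ n (Fin.snoc h a') = σ n (Fin.snoc h a) :=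
  ⟨_, Set.mem_biUnion hh ⟨⟨_, a, rfl⟩, rfl⟩,
    Set.apply_rangeSplitting (fun a => σ n (Fin.snoc h a)) _⟩

theorem exists_representativeHistory_forall_reply {p : β → Prop}
    (hσ : ∀ A : ℕ → α, ∃ n, p (σ n fun i => A i)) :
    ∃ n, ∃ h ∈ representativeHistories σ n, ∀ a, p (σ n (Fin.snoc h a)) := by
  by_contra! evade
  have evade_in_tree (n : ℕ) (h : Fin n → α) (hh : h ∈ representativeHistories σ n) :
      ∃ a, Fin.snoc h a ∈ representativeHistories σ (n + 1) ∧ ¬ p (σ n (Fin.snoc h a)) := by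
    obtain ⟨a, ha⟩ := evade n h hh
    obtain ⟨a', hmem, heq⟩ := exists_snoc_mem_representativeHistories hh a
    exact ⟨a', hmem, heq ▸ ha⟩
  obtain ⟨A, hA⟩ :=
    exists_seq_of_forall_exists_snoc (Q := fun n h => ¬ p (σ n h)) (Set.mem_univ _)
      evade_in_tree
  obtain ⟨n, hn⟩ := hσ A
  exact hA n hn

theorem exists_seq_histories_forall_reply
    (hσ : ∀ n (h : Fin n → α), (Set.range fun a => σ n (Fin.snoc h a)).Countable) :
    ∃ e : ℕ → Σ n, (Fin n → α), ∀ p : β → Prop, (∀ A : ℕ → α, ∃ n, p (σ n fun i => A i)) →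
      ∃ k, ∀ a, p (σ (e k).1 (Fin.snoc (e k).2 a)) := by
  have (n : ℕ) : Countable (representativeHistories σ n) :=
    (countable_representativeHistories hσ n).to_subtype
  have : Nonempty (Σ n, representativeHistories σ n) := ⟨0, Fin.elim0, Set.mem_univ _⟩
  obtain ⟨e, he⟩ := exists_surjective_nat (Σ n, representativeHistories σ n)
  refine ⟨fun k => ⟨(e k).1, (e k).2⟩, fun p hp => ?_⟩
  obtain ⟨n, h, hh, hreply⟩ := exists_representativeHistory_forall_reply hp
  exact (he.exists (p := fun t => ∀ a, p (σ t.1 (Fin.snoc t.2.1 a)))).1 ⟨⟨n, h, hh⟩, hreply⟩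

end History

section Game

variable {Y : Type*} {𝒜 𝒜' ℬ ℬ' 𝒯 : Set (Set Y)}

theorem WinMarkovFin.winStratFin : WinMarkovFin 𝒜 ℬ → WinStratFin 𝒜 ℬ := by
  rintro ⟨σ, hσ, hwin⟩
  exact ⟨fun n s => σ (s (Fin.last n)) n, fun n s hs => hσ _ (hs _) n, hwin⟩

theorem WinStratFin.mono (h𝒜 : 𝒜' ⊆ 𝒜) (hℬ : ℬ ⊆ ℬ') :
    WinStratFin 𝒜 ℬ → WinStratFin 𝒜' ℬ' := by
  rintro ⟨σ, hσ, hwin⟩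
  exact ⟨σ, fun n s hs => hσ n s fun i => h𝒜 (hs i), fun A hA => hℬ (hwin A fun n => h𝒜 (hA n))⟩

theorem WinMarkovFin.mono_right (hℬ : ∀ B ∈ ℬ, B ⊆ ⋃₀ 𝒜 → B ∈ ℬ') :
    WinMarkovFin 𝒜 ℬ → WinMarkovFin 𝒜 ℬ' := by
  rintro ⟨σ, hσ, hwin⟩
  refine ⟨σ, hσ, fun A hA => hℬ _ (hwin A hA) (Set.iUnion_subset fun n => ?_)⟩
  exact (hσ _ (hA n) n).2.trans (Set.subset_sUnion_of_mem (hA n))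

/-- The sets meeting every member of `𝒯`. This is the common form of the goals of selection games:
dense sets meet every nonempty open set, and ω-covers meet every family `{U | F ⊆ U}` with `F`
finite. -/
def hittingSets (𝒯 : Set (Set Y)) : Set (Set Y) :=
  {B | ∀ T ∈ 𝒯, (B ∩ T).Nonempty}

theorem WinStratFin.winMarkovFin_of_countable {C : Set Y} (hC : C.Countable)
    (h𝒜 : ∀ A ∈ 𝒜, A ⊆ C) :
    WinStratFin 𝒜 (hittingSets 𝒯) → WinMarkovFin 𝒜 (hittingSets 𝒯) := by
  rintro ⟨σ, hσ, hwin⟩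
  let τ (n : ℕ) (h : Fin (n + 1) → 𝒜) : Set Y := σ n fun i => h i
  have hτ (n : ℕ) (h : Fin n → 𝒜) (A : 𝒜) :
      (τ n (Fin.snoc h A)).Finite ∧ τ n (Fin.snoc h A) ⊆ A := by
    simpa only [Fin.snoc_last] using hσ n _ fun i => (Fin.snoc (α := fun _ => 𝒜) h A i).2
  have countable_replies (n : ℕ) (h : Fin n → 𝒜) :
      (Set.range fun A => τ n (Fin.snoc h A)).Countable := by
    refine (Set.countable_ofPred_finite_subset hC).mono ?_
    rintro _ ⟨A, rfl⟩
    exact ⟨(hτ n h A).1, (hτ n h A).2.trans (h𝒜 A A.2)⟩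
  obtain ⟨e, he⟩ := exists_seq_histories_forall_reply countable_replies
  let μ (A : Set Y) (k : ℕ) : Set Y := σ (e k).1 (Fin.snoc (fun i => ((e k).2 i : Set Y)) A)
  have μ_eq (A : 𝒜) (k : ℕ) : μ A k = τ (e k).1 (Fin.snoc (e k).2 A) :=
    congrArg (σ _) (Fin.comp_snoc Subtype.val (e k).2 A).symm
  refine ⟨μ, fun A hA k => μ_eq ⟨A, hA⟩ k ▸ hτ _ _ ⟨A, hA⟩, fun A hA T hT => ?_⟩
  have play_hits (A : ℕ → 𝒜) : ∃ n, (τ n (fun i => A i) ∩ T).Nonempty := by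
    obtain ⟨U, hU, hUT⟩ := hwin (fun n => A n) (fun n => (A n).2) T hT
    obtain ⟨n, hn⟩ := Set.mem_iUnion.1 hU
    exact ⟨n, U, hn, hUT⟩
  obtain ⟨k, hk⟩ := he (fun B => (B ∩ T).Nonempty) play_hits
  have hμ : (μ (A k) k ∩ T).Nonempty := μ_eq ⟨A k, hA k⟩ k ▸ hk ⟨A k, hA k⟩
  exact hμ.mono (Set.inter_subset_inter_left T (Set.subset_iUnion (fun k => μ (A k) k) k))

theorem WinMarkovFin.of_refinement [Preorder Y] (h𝒯 : ∀ T ∈ 𝒯, IsUpperSet T)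
    (hrefine : ∀ A ∈ 𝒜, ∃ A' ∈ 𝒜', ∀ V ∈ A', ∃ U ∈ A, V ≤ U) :
    WinMarkovFin 𝒜' (hittingSets 𝒯) → WinMarkovFin 𝒜 (hittingSets 𝒯) := by
  rintro ⟨σ, hσ, hwin⟩
  choose! r hr lift hlift hle using hrefine
  refine ⟨fun A n => lift A '' σ (r A) n, fun A hA n => ?_, fun A hA T hT => ?_⟩
  · obtain ⟨hfin, hsub⟩ := hσ _ (hr A hA) n
    exact ⟨hfin.image _, Set.image_subset_iff.2 fun V hV => hlift A hA V (hsub hV)⟩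
  · obtain ⟨V, hV, hVT⟩ := hwin (fun n => r (A n)) (fun n => hr _ (hA n)) T hT
    obtain ⟨n, hn⟩ := Set.mem_iUnion.1 hV
    have hVr : V ∈ r (A n) := (hσ _ (hr _ (hA n)) n).2 hn
    exact ⟨lift (A n) V, Set.mem_iUnion.2 ⟨n, V, hn, rfl⟩,
      h𝒯 T hT (hle _ (hA n) V hVr) hVT⟩

end Game

section OmegaCover

variable {X : Type*} [TopologicalSpace X]

theorem mem_omegaCovers_iff {𝒰 : Set (Set X)} :
    𝒰 ∈ omegaCovers X ↔
      (∀ U ∈ 𝒰, IsOpen U) ∧ 𝒰 ∈ hittingSets (Set.Ici '' {F : Set X | F.Finite}) := by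
  have hitting_iff : 𝒰 ∈ hittingSets (Set.Ici '' {F : Set X | F.Finite}) ↔
      ∀ F : Set X, F.Finite → ∃ U ∈ 𝒰, F ⊆ U :=
    Set.forall_mem_image
  rw [hitting_iff]
  refine ⟨fun h => ⟨h.1, h.2.2⟩, fun h => ⟨h.1, Set.eq_univ_of_forall fun x => ?_, h.2⟩⟩
  obtain ⟨U, hU, hxU⟩ := h.2 {x} (Set.finite_singleton x)
  exact ⟨U, hU, hxU rfl⟩

theorem exists_finite_sUnion_between {b : Set (Set X)} (hb : IsTopologicalBasis b) {K U : Set X}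
    (hK : IsCompact K) (hU : IsOpen U) (hKU : K ⊆ U) :
    ∃ S ⊆ b, S.Finite ∧ K ⊆ ⋃₀ S ∧ ⋃₀ S ⊆ U := by
  rw [hb.open_eq_sUnion' hU, Set.sUnion_eq_biUnion] at hKU
  obtain ⟨S, hS, hfin, hKS⟩ := hK.elim_finite_subcover_image (fun V hV => hb.isOpen hV.1) hKU
  rw [← Set.sUnion_eq_biUnion] at hKS
  exact ⟨S, fun V hV => (hS hV).1, hfin, hKS, Set.sUnion_subset fun V hV => (hS hV).2⟩

/-- An ω-base of `X`: a family of open sets containing, for every finite subset `F` of an open set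
`U`, a member between `F` and `U`. It plays for ω-covers the role that a base plays for covers. -/
def IsOmegaBase (C : Set (Set X)) : Prop :=
  (∀ V ∈ C, IsOpen V) ∧
    ∀ F U : Set X, F.Finite → IsOpen U → F ⊆ U → ∃ V ∈ C, F ⊆ V ∧ V ⊆ U

theorem exists_countable_isOmegaBase (X : Type*) [TopologicalSpace X]
    [SecondCountableTopology X] : ∃ C : Set (Set X), C.Countable ∧ IsOmegaBase C := by
  have hb := isBasis_countableBasis X
  refine ⟨Set.sUnion '' {S | S.Finite ∧ S ⊆ countableBasis X},
    (Set.countable_ofPred_finite_subset (countable_countableBasis X)).image _, ?_, ?_⟩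
  · rintro _ ⟨S, ⟨-, hS⟩, rfl⟩
    exact isOpen_sUnion fun V hV => hb.isOpen (hS hV)
  · intro F U hF hU hFU
    obtain ⟨S, hS, hfin, hFS, hSU⟩ := exists_finite_sUnion_between hb hF.isCompact hU hFU
    exact ⟨⋃₀ S, ⟨S, ⟨hfin, hS⟩, rfl⟩, hFS, hSU⟩

theorem IsOmegaBase.exists_refinement {C 𝒰 : Set (Set X)} (hC : IsOmegaBase C)
    (h𝒰 : 𝒰 ∈ omegaCovers X) :
    ∃ 𝒱 ∈ omegaCovers X, 𝒱 ⊆ C ∧ ∀ V ∈ 𝒱, ∃ U ∈ 𝒰, V ⊆ U := by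
  refine ⟨{V ∈ C | ∃ U ∈ 𝒰, V ⊆ U}, ?_, Set.sep_subset _ _, fun V hV => hV.2⟩
  refine mem_omegaCovers_iff.2 ⟨fun V hV => hC.1 V hV.1, Set.forall_mem_image.2 fun F hF => ?_⟩
  obtain ⟨U, hU, hFU⟩ := h𝒰.2.2 F hF
  obtain ⟨V, hV, hFV, hVU⟩ := hC.2 F U hF (h𝒰.1 U hU) hFU
  exact ⟨V, ⟨hV, U, hU, hVU⟩, hFV⟩

end OmegaCover

/-- for second-countable `X`, II wins `G_fin(Ω_X, Ω_X)` iff II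
wins it with a Markov strategy. -/
theorem statement14 (X : Type*) [TopologicalSpace X] [SecondCountableTopology X] :
    WinStratFin (omegaCovers X) (omegaCovers X) ↔
      WinMarkovFin (omegaCovers X) (omegaCovers X) := by
  refine ⟨fun hwin => ?_, WinMarkovFin.winStratFin⟩
  obtain ⟨C, hC, hbase⟩ := exists_countable_isOmegaBase X
  let 𝒯 : Set (Set (Set X)) := Set.Ici '' {F | F.Finite}
  have strategy_in_C : WinStratFin {𝒰 ∈ omegaCovers X | 𝒰 ⊆ C} (hittingSets 𝒯) :=
    hwin.mono (Set.sep_subset _ _) fun 𝒰 h𝒰 => (mem_omegaCovers_iff.1 h𝒰).2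
  have markov_in_C : WinMarkovFin {𝒰 ∈ omegaCovers X | 𝒰 ⊆ C} (hittingSets 𝒯) :=
    strategy_in_C.winMarkovFin_of_countable hC fun 𝒰 h𝒰 => h𝒰.2
  have markov : WinMarkovFin (omegaCovers X) (hittingSets 𝒯) := by
    refine markov_in_C.of_refinement (Set.forall_mem_image.2 fun F _ => isUpperSet_Ici F) ?_
    intro 𝒰 h𝒰
    obtain ⟨𝒱, h𝒱, h𝒱C, hrefines⟩ := hbase.exists_refinement h𝒰
    exact ⟨𝒱, ⟨h𝒱, h𝒱C⟩, hrefines⟩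
  refine markov.mono_right fun ℬ hℬ hsub => mem_omegaCovers_iff.2 ⟨fun U hU => ?_, hℬ⟩
  obtain ⟨𝒰, h𝒰, hU𝒰⟩ := hsub hU
  exact h𝒰.1 U hU𝒰
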